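/- Let w be a Kreweras word of length 3n. Then pro^{3n}(w) is obtained from w by replacing every letter B with C and every letter C with B. In particular, pro^{6n}(w) = w. -/

import Mathlib

/-- The three letters of a Kreweras word. -/
inductive KLetter : Type
  | A | B | C
deriving DecidableEq, Repr

open KLetter

/-- `w` is a Kreweras word of length `3 * n`: it has `n` `A`'s, `n` `B`'s, `n` `C`'s,
and every prefix has at least as many `A`'s as `B`'s and at least as many `A`'s as `C`'s. -/
def IsKrewerasWord (n : ℕ) (w : List KLetter) : Prop :=
  w.length = 3 * n ∧ w.count A = n ∧ w.count B = n ∧ w.count C = n ∧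
  ∀ k : ℕ, (w.take k).count B ≤ (w.take k).count A ∧
           (w.take k).count C ≤ (w.take k).count A

/-- `kiota w` is the smallest index `ι ≥ 1` (1-indexed) such that the prefix of
length `ι` of `w` has equally many `A`'s as `B`'s, or equally many `A`'s as `C`'s
(and `0` if no such index exists). -/
def kiota (w : List KLetter) : ℕ :=
  (((List.range (w.length + 1)).filter fun k =>
      decide (1 ≤ k) &&
      (((w.take k).count A == (w.take k).count B) ||
       ((w.take k).count A == (w.take k).count C))).headD 0)

/-- Promotion of a Kreweras word:
`pro w = (w₂, …, w_{ι-1}, A, w_{ι+1}, …, w_{3n}, w_ι)` where `ι = kiota w`. -/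
def pro (w : List KLetter) : List KLetter :=
  ((w.drop 1).set (kiota w - 2) A) ++ [w.getD (kiota w - 1) A]

/-- The trip permutation `σ_w` of a Kreweras word of length `3 * n`, as a function on
1-indexed positions: `σ_w i` is the unique element of `{1, …, 3n}` congruent to
`kiota (pro^[i-1] w) + i - 1` modulo `3 * n`. -/
def ksigma (n : ℕ) (w : List KLetter) (i : ℕ) : ℕ :=
  (kiota (pro^[i - 1] w) + i - 2) % (3 * n) + 1

/-- `keps w i` is the letter of `pro^[i-1] w` in (1-indexed) position `kiota (pro^[i-1] w)`. -/
def keps (w : List KLetter) (i : ℕ) : KLetter :=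
  (pro^[i - 1] w).getD (kiota (pro^[i - 1] w) - 1) A

/-- The negation swapping `B` and `C` (and fixing `A`). -/
def negL : KLetter → KLetter
  | A => A
  | B => C
  | C => B

open Classical in
/-- The involution `τ_i` on Kreweras words of length `3 * n`: swap the letters in
(1-indexed) positions `i` and `i + 1` if the result is again a Kreweras word,
and otherwise do nothing. -/
noncomputable def tau (n i : ℕ) (w : List KLetter) : List KLetter :=
  let w' := (w.set (i - 1) (w.getD i A)).set i (w.getD (i - 1) A)
  if IsKrewerasWord n w' then w' else w

/-- `tauDown n j = τ_j ∘ τ_{j-1} ∘ ⋯ ∘ τ_1`. -/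
noncomputable def tauDown (n : ℕ) : ℕ → List KLetter → List KLetter
  | 0, w => w
  | j + 1, w => tau n (j + 1) (tauDown n j w)

/-- `evacAux n j = (tauDown n 1) ∘ (tauDown n 2) ∘ ⋯ ∘ (tauDown n j)`. -/
noncomputable def evacAux (n : ℕ) : ℕ → List KLetter → List KLetter
  | 0, w => w
  | j + 1, w => evacAux n j (tauDown n (j + 1) w)

/-- Evacuation on Kreweras words of length `3 * n`:
`evac = (τ_1) ∘ (τ_2 ∘ τ_1) ∘ ⋯ ∘ (τ_{3n-1} ∘ ⋯ ∘ τ_2 ∘ τ_1)`. -/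
noncomputable def evac (n : ℕ) (w : List KLetter) : List KLetter :=
  evacAux n (3 * n - 1) w

/-- `tauAsc n k c = τ_{k+c-1} ∘ ⋯ ∘ τ_{k+1} ∘ τ_k`. -/
noncomputable def tauAsc (n k : ℕ) : ℕ → List KLetter → List KLetter
  | 0, w => w
  | j + 1, w => tau n (k + j) (tauAsc n k j w)

/-- `evacStarAux n j = (tauAsc n 1 (3n-1)) ∘ (tauAsc n 2 (3n-2)) ∘ ⋯ ∘ (tauAsc n j (3n-j))`. -/
noncomputable def evacStarAux (n : ℕ) : ℕ → List KLetter → List KLetter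
  | 0, w => w
  | j + 1, w => evacStarAux n j (tauAsc n (j + 1) (3 * n - (j + 1)) w)

/-- Dual evacuation on Kreweras words of length `3 * n`:
`evac* = (τ_{3n-1} ∘ ⋯ ∘ τ_1) ∘ (τ_{3n-1} ∘ ⋯ ∘ τ_2) ∘ ⋯ ∘ (τ_{3n-1})`. -/
noncomputable def evacStar (n : ℕ) (w : List KLetter) : List KLetter :=
  evacStarAux n (3 * n - 1) w

/-- The three-element "V"-shaped poset: `a < b`, `a < c`, with `b`, `c` incomparable. -/
inductive VP : Type
  | a | b | c
deriving DecidableEq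

instance : PartialOrder VP where
  le x y := x = y ∨ x = VP.a
  le_refl x := Or.inl rfl
  le_trans x y z hxy hyz := by
    rcases hxy with rfl | rfl
    · exact hyz
    · exact Or.inr rfl
  le_antisymm x y hxy hyx := by
    rcases hxy with rfl | rfl
    · rfl
    · rcases hyx with rfl | rfl <;> rfl

/-- The labeling of elements of `V(n) = VP × Fin n` by letters. -/
def vlabel {n : ℕ} (p : VP × Fin n) : KLetter :=
  match p.1 with
  | VP.a => A
  | VP.b => B
  | VP.c => C

/-- `L` is a linear extension of `V(n) = VP × Fin n` (with the product order):
a list of all elements of `V(n)`, each appearing once, such that `L_i ≤ L_j`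
implies `i ≤ j`. -/
def IsLinearExtension (n : ℕ) (L : List (VP × Fin n)) : Prop :=
  L.Nodup ∧ (∀ p : VP × Fin n, p ∈ L) ∧
  ∀ i j : Fin L.length, L.get i ≤ L.get j → (i : ℕ) ≤ (j : ℕ)

/-- A connected Kreweras word: a Kreweras word of length `3 * n` having no proper
nonempty consecutive substring which is itself a Kreweras word. -/
def ConnectedKrewerasWord (n : ℕ) (w : List KLetter) : Prop :=
  IsKrewerasWord n w ∧
  ∀ (u : List KLetter) (m : ℕ), u <:+: w → u ≠ [] → u ≠ w → ¬ IsKrewerasWord m u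

/-!
A Kreweras word is a closed walk in the quarter plane: its coordinates are the excess of `A`'s over
`B`'s and the excess of `A`'s over `C`'s. Let the letters keep their times under promotion, which
then deletes the initial `A`, turns the letter `L` of the first return to an axis into an `A`, and
appends a new `L` at the end. A race between the two coordinates, played alternately to the left and
to the right of a letter `B` or `C`, determines a destination of this letter. For the appended `L`
it is the place of the letter that has just been turned. Later promotions preserve it, except that a
destination which is deleted moves to the letter appended at that moment. When the letter at the
start of the race is itself turned into an `A`, its destination becomes the place where the walk
leaves the quadrant above that `A`, through the coordinate other than that of `L`.

So let `L` at position `b` be the first return of `w`. After `3n` promotions the `L` appended by the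
first one has become the initial `A`, with destination `b + 3n`: the first return of `pro^[3n] w` is
at the same position `b`, on the other axis. The same holds for every `pro^[k] w`, and the sequence
of first returns of its iterated promotions determines a word.
-/


/-- The walk `x` is `0` at the times `o` and `M` and nonnegative in between. -/
structure IsExcursion (x : ℕ → ℤ) (o M : ℕ) : Prop where
  start_eq : x o = 0
  end_eq : x M = 0
  nonneg : ∀ t ∈ Set.Icc o M, 0 ≤ x t

theorem IsExcursion.delay {x : ℕ → ℤ} {M : ℕ} (h : IsExcursion x 0 M) (o : ℕ) :
    IsExcursion (fun t => x (t - o)) o (M + o) where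
  start_eq := by simpa using h.start_eq
  end_eq := by simpa using h.end_eq
  nonneg t ht := h.nonneg _ ⟨zero_le, Nat.sub_le_of_le_add ht.2⟩

/-- The walks `x` and `x'` have the same increments on `s`. -/
def IsShiftOn (x x' : ℕ → ℤ) (s : Set ℕ) : Prop :=
  ∃ d, ∀ t ∈ s, x' t = x t + d

/-- Round `j` of the trip from `p`, leftward half: going left from time `p + 1`, the walk `y` falls
`j + 1` below its initial value no later than `x` falls `j` below its own. -/
def LeftPass (x y : ℕ → ℤ) (o p j : ℕ) : Prop :=
  ∀ t ∈ Set.Icc o p, x t ≤ x (p + 1) - j → ∃ u ∈ Set.Icc t p, y u < y (p + 1) - j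

/-- Round `j` of the trip from `p`, rightward half: going right from time `p + 1`, the walk `x`
falls `j + 1` below its initial value no later than `y` does. -/
def RightPass (x y : ℕ → ℤ) (M p j : ℕ) : Prop :=
  ∀ t ∈ Set.Ioc p M, y t < y (p + 1) - j → ∃ u ∈ Set.Ioc p t, x u < x (p + 1) - j

/-- The leftward half of round `k` is lost, and the trip from `p` ends at the up-step `q` at which
`x` leaves the level `x (p + 1) - k` for the last time before `p`. -/
structure LeftExit (x y : ℕ → ℤ) (o p q k : ℕ) : Prop where
  le : o ≤ q
  le_start : q ≤ p
  level_eq : x q = x (p + 1) - k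
  lt_fst : ∀ t ∈ Set.Ioc q p, x (p + 1) - k < x t
  le_snd : ∀ t ∈ Set.Icc q p, y (p + 1) - k ≤ y t

/-- The rightward half of round `k` is lost, and the trip from `p` ends at the down-step `q` at
which `y` first falls below the level `y (p + 1) - k`. -/
structure RightExit (x y : ℕ → ℤ) (M p q k : ℕ) : Prop where
  start_lt : p < q
  lt : q < M
  level_eq : y (q + 1) = y (p + 1) - k - 1
  le_fst : ∀ t ∈ Set.Ioc p q, x (p + 1) - k ≤ x t
  le_snd : ∀ t ∈ Set.Ioc p q, y (p + 1) - k ≤ y t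

/-- The trip from the down-step `p` of `x` ends at `q`. It plays rounds `0, 1, 2, …` of
`LeftPass` and `RightPass` in alternation until one of them fails. It plays the role of the trips
of Hopkins and Rubey in the web of the Kreweras word with height functions `x` and `y`. -/
inductive Trip (x y : ℕ → ℤ) (o M p q : ℕ) : Prop
  | left (k : ℕ) (hR : ∀ j < k, RightPass x y M p j) (hL : ∀ j < k, LeftPass x y o p j)
      (hE : LeftExit x y o p q k)
  | right (k : ℕ) (hR : ∀ j < k, RightPass x y M p j) (hL : ∀ j ≤ k, LeftPass x y o p j)
      (hE : RightExit x y M p q k)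

/-- The arc of the up-step `p` ends at the down-step `q` of `y`: the excursion of `(x, y)` above
its position at time `p` is left at `q`, through the second coordinate. -/
structure Arc (x y : ℕ → ℤ) (M p q : ℕ) : Prop where
  start_lt : p < q
  lt : q < M
  snd_eq : y (q + 1) = y p
  fst_lt : x p < x (q + 1)
  above : ∀ t ∈ Set.Ioc p q, x p < x t ∧ y p < y t

/-- The walk `(x', y')` on `[o + 1, M + 1]` is the promotion of `(x, y)` on `[o, M]`, where the
first return to the axes is the down-step `b` of `x`. Promotion deletes the up-step `o`, turns `b`
into an up-step and appends a down-step of `x'` at `M`; all other steps keep their times.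
A return to the axis `y = 0` is expressed by `Promotion y x y' x'`. -/
structure Promotion (x y x' y' : ℕ → ℤ) (o M b : ℕ) : Prop where
  fst : IsExcursion x o M
  snd : IsExcursion y o M
  fst' : IsExcursion x' (o + 1) (M + 1)
  snd' : IsExcursion y' (o + 1) (M + 1)
  start_lt : o < b
  lt_end : b < M
  eq_one : x b = 1
  return_eq : x (b + 1) = 0
  snd_return_eq : y (b + 1) = y b
  pos : ∀ t ∈ Set.Ioc o b, 0 < x t ∧ 0 < y t
  before : ∀ t ∈ Set.Ioc o b, x' t = x t - 1 ∧ y' t = y t - 1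
  after : ∀ t ∈ Set.Ioc b M, x' t = x t + 1 ∧ y' t = y t

section Race

variable {x y x' y' : ℕ → ℤ} {o o' M M' p q s j k : ℕ}

theorem LeftPass.shift (h : LeftPass x y o p j) (ho : o ≤ o')
    (hx : IsShiftOn x x' (Set.Icc o' (p + 1))) (hy : IsShiftOn y y' (Set.Icc o' (p + 1))) :
    LeftPass x' y' o' p j := by
  obtain ⟨d, hd⟩ := hx
  obtain ⟨e, he⟩ := hy
  rintro t ⟨hot, htp⟩ ht
  rw [hd t ⟨hot, by omega⟩, hd (p + 1) ⟨by omega, le_rfl⟩] at ht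
  obtain ⟨u, ⟨htu, hup⟩, hu⟩ := h t ⟨by omega, htp⟩ (by omega)
  refine ⟨u, ⟨htu, hup⟩, ?_⟩
  rw [he u ⟨by omega, by omega⟩, he (p + 1) ⟨by omega, le_rfl⟩]
  omega

theorem LeftPass.extend (h : LeftPass x y s p j)
    (hs : ∀ t ∈ Set.Ico o s, ∃ u ∈ Set.Icc t p, y u < y (p + 1) - j) :
    LeftPass x y o p j := fun t ht hxt =>
  (lt_or_ge t s).elim (fun hts => hs t ⟨ht.1, hts⟩) fun hst => h t ⟨hst, ht.2⟩ hxt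

theorem RightPass.shift (h : RightPass x y M p j) (hM : M' ≤ M)
    (hx : IsShiftOn x x' (Set.Ioc p M')) (hy : IsShiftOn y y' (Set.Ioc p M')) :
    RightPass x' y' M' p j := by
  obtain ⟨d, hd⟩ := hx
  obtain ⟨e, he⟩ := hy
  rintro t ⟨hpt, htM⟩ ht
  rw [he t ⟨hpt, htM⟩, he (p + 1) ⟨by omega, by omega⟩] at ht
  obtain ⟨u, ⟨hpu, hut⟩, hu⟩ := h t ⟨hpt, by omega⟩ (by omega)
  refine ⟨u, ⟨hpu, hut⟩, ?_⟩
  rw [hd u ⟨hpu, by omega⟩, hd (p + 1) ⟨by omega, by omega⟩]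
  omega

theorem RightPass.extend (h : RightPass x y s p j)
    (hs : ∀ t ∈ Set.Ioc s M, y t < y (p + 1) - j → ∃ u ∈ Set.Ioc p t, x u < x (p + 1) - j) :
    RightPass x y M p j := fun t ht hyt =>
  (le_or_gt t s).elim (fun hts => h t ⟨ht.1, hts⟩ hyt) fun hst => hs t ⟨hst, ht.2⟩ hyt

theorem LeftExit.shift (h : LeftExit x y o p q k) (hq : o' ≤ q)
    (hx : IsShiftOn x x' (Set.Icc q (p + 1))) (hy : IsShiftOn y y' (Set.Icc q (p + 1))) :
    LeftExit x' y' o' p q k := by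
  obtain ⟨d, hd⟩ := hx
  obtain ⟨e, he⟩ := hy
  have hqp := h.le_start
  have hdp := hd (p + 1) ⟨by omega, le_rfl⟩
  have hep := he (p + 1) ⟨by omega, le_rfl⟩
  refine ⟨hq, hqp, ?_, fun t ht => ?_, fun t ht => ?_⟩
  · have := hd q ⟨le_rfl, by omega⟩
    have := h.level_eq
    omega
  · have := hd t ⟨ht.1.le, ht.2.trans p.le_succ⟩
    have := h.lt_fst t ht
    omega
  · have := he t ⟨ht.1, ht.2.trans p.le_succ⟩
    have := h.le_snd t ht
    omega

theorem RightExit.shift (h : RightExit x y M p q k) (hq : q < M')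
    (hx : IsShiftOn x x' (Set.Ioc p (q + 1))) (hy : IsShiftOn y y' (Set.Ioc p (q + 1))) :
    RightExit x' y' M' p q k := by
  obtain ⟨d, hd⟩ := hx
  obtain ⟨e, he⟩ := hy
  have hpq := h.start_lt
  have hdp := hd (p + 1) ⟨by omega, by omega⟩
  have hep := he (p + 1) ⟨by omega, by omega⟩
  refine ⟨hpq, hq, ?_, fun t ht => ?_, fun t ht => ?_⟩
  · have := he (q + 1) ⟨by omega, le_rfl⟩
    have := h.level_eq
    omega
  · have := hd t ⟨ht.1, ht.2.trans q.le_succ⟩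
    have := h.le_fst t ht
    omega
  · have := he t ⟨ht.1, ht.2.trans q.le_succ⟩
    have := h.le_snd t ht
    omega

theorem Arc.shift (h : Arc x y M p q) (hq : q < M')
    (hx : IsShiftOn x x' (Set.Icc p (q + 1))) (hy : IsShiftOn y y' (Set.Icc p (q + 1))) :
    Arc x' y' M' p q := by
  obtain ⟨d, hd⟩ := hx
  obtain ⟨e, he⟩ := hy
  have hpq := h.start_lt
  have hdp := hd p ⟨le_rfl, by omega⟩
  have hep := he p ⟨le_rfl, by omega⟩
  refine ⟨hpq, hq, ?_, ?_, fun t ht => ?_⟩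
  · have := he (q + 1) ⟨by omega, le_rfl⟩
    have := h.snd_eq
    omega
  · have := hd (q + 1) ⟨by omega, le_rfl⟩
    have := h.fst_lt
    omega
  · have := hd t ⟨ht.1.le, ht.2.trans q.le_succ⟩
    have := he t ⟨ht.1.le, ht.2.trans q.le_succ⟩
    have := h.above t ht
    omega

theorem RightExit.level_le_fst (h : RightExit x y M p q k) (hx : ∀ t ∈ Set.Ioc p M, 0 ≤ x t)
    (hR : ∀ j < k, RightPass x y M p j) : (k : ℤ) ≤ x (p + 1) := by
  have hpq := h.start_lt
  have hqM := h.lt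
  cases k with
  | zero => exact hx (p + 1) ⟨by omega, by omega⟩
  | succ k =>
    have hq := h.level_eq
    obtain ⟨u, ⟨hpu, huq⟩, hu⟩ := hR k k.lt_succ_self (q + 1) ⟨by omega, by omega⟩ (by omega)
    have := hx u ⟨hpu, by omega⟩
    omega

theorem LeftExit.level_le_snd (h : LeftExit x y o p q k) (hxo : x o = 0) (hxq : 0 ≤ x q)
    (hy : ∀ t ∈ Set.Icc o (p + 1), 0 ≤ y t) (hL : ∀ j < k, LeftPass x y o p j) :
    (k : ℤ) ≤ y (p + 1) := by
  have hoq := h.le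
  have hqp := h.le_start
  cases k with
  | zero => exact hy (p + 1) ⟨by omega, le_rfl⟩
  | succ k =>
    have hq := h.level_eq
    obtain ⟨u, ⟨hou, hup⟩, hu⟩ := hL k k.lt_succ_self o ⟨le_rfl, by omega⟩ (by omega)
    have := hy u ⟨hou, by omega⟩
    omega

theorem LeftExit.start_lt_of_pos (h : LeftExit x y o p q k) (hxo : x o = 0) (hyo : y o = 0)
    (hxo' : x (o + 1) ≤ 1) (hop : o < p)
    (hpos : ∀ t ∈ Set.Ioc o (p + 1), 0 < x t ∧ 0 < y t) (hL : ∀ j < k, LeftPass x y o p j) :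
    o < q := by
  refine h.le.lt_of_ne ?_
  rintro rfl
  have hlevel := h.level_eq
  have hp := hpos (p + 1) ⟨by omega, le_rfl⟩
  have hyk := h.le_snd o ⟨le_rfl, hop.le⟩
  cases k with
  | zero => omega
  | succ k =>
    obtain ⟨u, ⟨hou, hup⟩, hu⟩ := hL k k.lt_succ_self (o + 1) ⟨by omega, by omega⟩ (by omega)
    have := hpos u ⟨by omega, by omega⟩
    omega

end Race

namespace Promotion

variable {x y x' y' : ℕ → ℤ} {o M b p q j k : ℕ} {s : Set ℕ}

theorem fst_shift_before (h : Promotion x y x' y' o M b) (hs : s ⊆ Set.Ioc o b) :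
    IsShiftOn x x' s :=
  ⟨-1, fun t ht => (h.before t (hs ht)).1⟩

theorem snd_shift_before (h : Promotion x y x' y' o M b) (hs : s ⊆ Set.Ioc o b) :
    IsShiftOn y y' s :=
  ⟨-1, fun t ht => (h.before t (hs ht)).2⟩

theorem fst_shift_after (h : Promotion x y x' y' o M b) (hs : s ⊆ Set.Ioc b M) :
    IsShiftOn x x' s :=
  ⟨1, fun t ht => (h.after t (hs ht)).1⟩

theorem snd_shift_after (h : Promotion x y x' y' o M b) (hs : s ⊆ Set.Ioc b M) :
    IsShiftOn y y' s :=
  ⟨0, fun t ht => by rw [(h.after t (hs ht)).2, add_zero]⟩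

theorem fst_start_eq (h : Promotion x y x' y' o M b) : x (o + 1) = 1 := by
  have hob := h.start_lt
  have := h.before (o + 1) ⟨by omega, hob⟩
  have := h.fst'.start_eq
  omega

theorem snd_start_eq (h : Promotion x y x' y' o M b) : y (o + 1) = 1 := by
  have hob := h.start_lt
  have := h.before (o + 1) ⟨by omega, hob⟩
  have := h.snd'.start_eq
  omega

theorem fst'_eq_zero (h : Promotion x y x' y' o M b) : x' b = 0 := by
  rw [(h.before b ⟨h.start_lt, le_rfl⟩).1, h.eq_one, sub_self]

theorem fst'_eq_one (h : Promotion x y x' y' o M b) : x' (b + 1) = 1 := by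
  rw [(h.after (b + 1) ⟨b.lt_succ_self, h.lt_end⟩).1, h.return_eq, zero_add]

section Fst

theorem leftPass_fst_of_lt (h : Promotion x y x' y' o M b) (hb : b < p) (hp : p < M)
    (hL : LeftPass x y o p j) (hj : j ≤ x (p + 1)) : LeftPass x' y' (o + 1) p j := by
  have hob := h.start_lt
  have hafter : Set.Icc (b + 1) (p + 1) ⊆ Set.Ioc b M := fun t ht => ⟨ht.1, ht.2.trans hp⟩
  refine (hL.shift (o' := b + 1) (by omega) (h.fst_shift_after hafter)
    (h.snd_shift_after hafter)).extend fun t ht => ?_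
  have hreturn := h.return_eq
  obtain ⟨u, ⟨hbu, hup⟩, hu⟩ := hL (b + 1) ⟨by omega, hb⟩ (by omega)
  refine ⟨u, ⟨ht.2.le.trans hbu, hup⟩, ?_⟩
  rwa [(h.after u ⟨hbu, by omega⟩).2, (h.after (p + 1) ⟨by omega, hp⟩).2]

theorem rightPass_fst_of_lt (h : Promotion x y x' y' o M b) (hb : b < p) (hp : p < M)
    (hR : RightPass x y M p j) : RightPass x' y' (M + 1) p j := by
  have hafter : Set.Ioc p M ⊆ Set.Ioc b M := Set.Ioc_subset_Ioc_left hb.le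
  refine (hR.shift le_rfl (h.fst_shift_after hafter)
    (h.snd_shift_after hafter)).extend fun t ht hyt => ?_
  obtain rfl : t = M + 1 := le_antisymm ht.2 ht.1
  rw [h.snd'.end_eq, (h.after (p + 1) ⟨by omega, hp⟩).2] at hyt
  obtain ⟨u, ⟨hpu, huM⟩, hu⟩ := hR M ⟨hp, le_rfl⟩ (by rwa [h.snd.end_eq])
  refine ⟨u, ⟨hpu, by omega⟩, ?_⟩
  rw [(h.after u ⟨by omega, huM⟩).1, (h.after (p + 1) ⟨by omega, hp⟩).1]
  omega

theorem trip_fst_of_lt (h : Promotion x y x' y' o M b) (hb : b < p) (hp : p < M)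
    (hT : Trip x y o M p q) : q ≠ o ∧ Trip x' y' (o + 1) (M + 1) p q := by
  have hob := h.start_lt
  cases hT with
  | left k hR hL hE =>
    have hqp := hE.le_start
    have hlevel := hE.level_eq
    have hxq := h.fst.nonneg q ⟨hE.le, by omega⟩
    have hbq : b < q := by
      by_contra! hqb
      have := hE.lt_fst (b + 1) ⟨by omega, by omega⟩
      have := h.return_eq
      omega
    have hafter : Set.Icc q (p + 1) ⊆ Set.Ioc b M := fun t ht => ⟨hbq.trans_le ht.1, ht.2.trans hp⟩
    exact ⟨by omega, .left k (fun j hj => h.rightPass_fst_of_lt hb hp (hR j hj))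
      (fun j hj => h.leftPass_fst_of_lt hb hp (hL j hj) (by omega))
      (hE.shift (by omega) (h.fst_shift_after hafter) (h.snd_shift_after hafter))⟩
  | right k hR hL hE =>
    have hpq := hE.start_lt
    have hqM := hE.lt
    have hk := hE.level_le_fst (fun t ht => h.fst.nonneg t ⟨by have := ht.1; omega, ht.2⟩) hR
    have hafter : Set.Ioc p (q + 1) ⊆ Set.Ioc b M := Set.Ioc_subset_Ioc hb.le hqM
    exact ⟨by omega, .right k (fun j hj => h.rightPass_fst_of_lt hb hp (hR j hj))
      (fun j hj => h.leftPass_fst_of_lt hb hp (hL j hj) (by omega))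
      (hE.shift (by omega) (h.fst_shift_after hafter) (h.snd_shift_after hafter))⟩

theorem leftPass_fst_of_gt (h : Promotion x y x' y' o M b) (hb : p < b)
    (hL : LeftPass x y o p j) : LeftPass x' y' (o + 1) p j := by
  have hbefore : Set.Icc (o + 1) (p + 1) ⊆ Set.Ioc o b := fun t ht => ⟨ht.1, ht.2.trans hb⟩
  exact hL.shift o.le_succ (h.fst_shift_before hbefore) (h.snd_shift_before hbefore)

theorem rightPass_fst_of_gt (h : Promotion x y x' y' o M b) (ho : o < p) (hb : p < b)
    (hR : RightPass x y M p j) (hj : j + 1 < x (p + 1)) : RightPass x' y' (M + 1) p j := by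
  have hbM := h.lt_end
  have hbefore : Set.Ioc p b ⊆ Set.Ioc o b := Set.Ioc_subset_Ioc_left ho.le
  refine (hR.shift hbM.le (h.fst_shift_before hbefore)
    (h.snd_shift_before hbefore)).extend fun t ht _ => ⟨b, ⟨hb, ht.1.le⟩, ?_⟩
  rw [h.fst'_eq_zero, (h.before (p + 1) ⟨by omega, hb⟩).1]
  omega

theorem rightPass_fst_of_rightExit (h : Promotion x y x' y' o M b) (ho : o < p) (hqb : q < b)
    (hR : RightPass x y M p j) (hE : RightExit x y M p q k) (hj : j < k) :
    RightPass x' y' (M + 1) p j := by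
  have hbM := h.lt_end
  have hpq := hE.start_lt
  have hbefore : Set.Ioc p b ⊆ Set.Ioc o b := Set.Ioc_subset_Ioc_left ho.le
  refine (hR.shift hbM.le (h.fst_shift_before hbefore)
    (h.snd_shift_before hbefore)).extend fun t ht _ => ?_
  have hlevel := hE.level_eq
  obtain ⟨u, ⟨hpu, huq⟩, hu⟩ := hR (q + 1) ⟨by omega, by omega⟩ (by omega)
  refine ⟨u, ⟨hpu, huq.trans (hqb.trans ht.1)⟩, ?_⟩
  rw [(h.before u ⟨by omega, by omega⟩).1, (h.before (p + 1) ⟨by omega, by omega⟩).1]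
  omega

theorem rightExit_fst_of_gt (h : Promotion x y x' y' o M b) (ho : o < p) (hb : p < b)
    (hbq : b < q) (hR : RightPass x y M p k) (hE : RightExit x y M p q (k + 1))
    (hk : k + 1 = x (p + 1)) : RightExit x' y' (M + 1) p q k := by
  have hqM := hE.lt
  have hlevel := hE.level_eq
  have hp := h.before (p + 1) ⟨by omega, hb⟩
  refine ⟨hE.start_lt, by omega, ?_, fun t ht => ?_, fun t ht => ?_⟩
  · have := h.after (q + 1) ⟨by omega, hqM⟩
    omega
  · have := h.fst'.nonneg t ⟨by have := ht.1; omega, by have := ht.2; omega⟩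
    omega
  · have hyt := hE.le_snd t ht
    obtain ⟨hpt, htq⟩ := ht
    rcases le_or_gt t b with htb | hbt
    · have hyt' : y (p + 1) - k ≤ y t := by
        by_contra! hlt
        obtain ⟨u, ⟨hpu, hut⟩, hu⟩ := hR t ⟨hpt, by omega⟩ hlt
        have := h.pos u ⟨by omega, by omega⟩
        omega
      have := h.before t ⟨by omega, htb⟩
      omega
    · have := h.after t ⟨hbt, by omega⟩
      omega

theorem trip_fst_of_rightExit (h : Promotion x y x' y' o M b) (ho : o < p) (hb : p < b)
    (hR : ∀ j < k, RightPass x y M p j) (hL : ∀ j ≤ k, LeftPass x y o p j)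
    (hE : RightExit x y M p q k) : Trip x' y' (o + 1) (M + 1) p q := by
  have hqM := hE.lt
  rcases lt_trichotomy q b with hqb | rfl | hbq
  · have hbefore : Set.Ioc p (q + 1) ⊆ Set.Ioc o b := Set.Ioc_subset_Ioc ho.le hqb
    exact .right k (fun j hj => h.rightPass_fst_of_rightExit ho hqb (hR j hj) hE hj)
      (fun j hj => h.leftPass_fst_of_gt hb (hL j hj))
      (hE.shift (by omega) (h.fst_shift_before hbefore) (h.snd_shift_before hbefore))
  · have := hE.level_eq
    have := hE.le_snd q ⟨hb, le_rfl⟩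
    have := h.snd_return_eq
    omega
  · -- The level `x (p + 1) - k` is the axis. As promotion lowers `y` to the left of `b` only, the
    -- drop of `y` from `p + 1` to `q + 1` is one less, and the trip ends one round earlier.
    have hxp := (h.pos (p + 1) ⟨by omega, hb⟩).1
    have hk : k = x (p + 1) := by
      have := hE.level_le_fst (fun t ht => h.fst.nonneg t ⟨by have := ht.1; omega, ht.2⟩) hR
      have := hE.le_fst (b + 1) ⟨by omega, hbq⟩
      have := h.return_eq
      omega
    obtain ⟨k, rfl⟩ : ∃ m, k = m + 1 := ⟨k - 1, by omega⟩
    exact .right k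
      (fun j hj => h.rightPass_fst_of_gt ho hb (hR j (by omega)) (by omega))
      (fun j hj => h.leftPass_fst_of_gt hb (hL j (by omega)))
      (h.rightExit_fst_of_gt ho hb hbq (hR k (by omega)) hE (mod_cast hk))

theorem trip_fst_of_gt (h : Promotion x y x' y' o M b) (ho : o < p) (hb : p < b)
    (hT : Trip x y o M p q) : q ≠ o ∧ Trip x' y' (o + 1) (M + 1) p q := by
  have hpos : ∀ t ∈ Set.Ioc o (p + 1), 0 < x t ∧ 0 < y t := fun t ht =>
    h.pos t ⟨ht.1, ht.2.trans hb⟩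
  cases hT with
  | left k hR hL hE =>
    have hoq := hE.start_lt_of_pos h.fst.start_eq h.snd.start_eq h.fst_start_eq.le ho hpos hL
    have hxq := hpos q ⟨hoq, hE.le_start.trans p.le_succ⟩
    have hlevel := hE.level_eq
    have hbefore : Set.Icc q (p + 1) ⊆ Set.Ioc o b := fun t ht =>
      ⟨hoq.trans_le ht.1, ht.2.trans hb⟩
    exact ⟨hoq.ne', .left k (fun j hj => h.rightPass_fst_of_gt ho hb (hR j hj) (by omega))
      (fun j hj => h.leftPass_fst_of_gt hb (hL j hj))
      (hE.shift hoq (h.fst_shift_before hbefore) (h.snd_shift_before hbefore))⟩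
  | right k hR hL hE =>
    have hpq := hE.start_lt
    exact ⟨by omega, h.trip_fst_of_rightExit ho hb hR hL hE⟩

theorem trip_fst (h : Promotion x y x' y' o M b) (ho : o < p) (hb : p ≠ b) (hp : p < M)
    (hT : Trip x y o M p q) : q ≠ o ∧ Trip x' y' (o + 1) (M + 1) p q :=
  (lt_or_gt_of_ne hb).elim (fun hpb => h.trip_fst_of_gt ho hpb hT)
    fun hbp => h.trip_fst_of_lt hbp hp hT

end Fst

section Snd

theorem leftPass_snd_of_lt (h : Promotion y x y' x' o M b) (hb : b < p) (hp : p < M)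
    (hL : LeftPass x y o p j) (hj : j < y (p + 1)) : LeftPass x' y' (o + 1) p j := by
  have hob := h.start_lt
  have hafter : Set.Icc (b + 1) (p + 1) ⊆ Set.Ioc b M := fun t ht => ⟨ht.1, ht.2.trans hp⟩
  refine (hL.shift (o' := b + 1) (by omega) (h.snd_shift_after hafter)
    (h.fst_shift_after hafter)).extend fun t ht => ⟨b + 1, ⟨ht.2.le, hb⟩, ?_⟩
  rw [h.fst'_eq_one, (h.after (p + 1) ⟨by omega, hp⟩).1]
  omega

theorem rightPass_snd_of_lt (h : Promotion y x y' x' o M b) (hb : b < p) (hp : p < M)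
    (hR : RightPass x y M p j) (hj : j < y (p + 1)) : RightPass x' y' (M + 1) p j := by
  have hafter : Set.Ioc p M ⊆ Set.Ioc b M := Set.Ioc_subset_Ioc_left hb.le
  refine (hR.shift le_rfl (h.snd_shift_after hafter)
    (h.fst_shift_after hafter)).extend fun t ht _ => ?_
  obtain ⟨u, ⟨hpu, huM⟩, hu⟩ := hR M ⟨hp, le_rfl⟩ (by rw [h.fst.end_eq]; omega)
  refine ⟨u, ⟨hpu, huM.trans ht.1.le⟩, ?_⟩
  rwa [(h.after u ⟨by omega, huM⟩).2, (h.after (p + 1) ⟨by omega, hp⟩).2]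

theorem leftPass_snd_of_leftExit (h : Promotion y x y' x' o M b) (hb : b < p) (hp : p < M)
    (hE : LeftExit x y o p q k) (hqb : q ≤ b) (hk : k = y (p + 1)) :
    LeftPass x' y' (o + 1) p k := by
  have hxp := (h.after (p + 1) ⟨by omega, hp⟩).2
  have hvacuous : LeftPass x' y' (b + 1) p k := by
    rintro t ⟨hbt, htp⟩ hxt
    have := hE.lt_fst t ⟨by omega, htp⟩
    have := (h.after t ⟨hbt, by omega⟩).2
    omega
  refine hvacuous.extend fun t ht => ⟨b, ⟨Nat.le_of_lt_succ ht.2, hb.le⟩, ?_⟩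
  rw [h.fst'_eq_zero, (h.after (p + 1) ⟨by omega, hp⟩).1]
  omega

theorem rightExit_snd_of_eq (h : Promotion y x y' x' o M b) (hb : b < p) (hp : p < M)
    (hlevel : x (p + 1) = k) (hk : k = y (p + 1)) : RightExit x' y' (M + 1) p M k := by
  have hp' := h.after (p + 1) ⟨by omega, hp⟩
  refine ⟨hp, M.lt_succ_self, ?_, fun t ht => ?_, fun t ht => ?_⟩
  · rw [h.fst'.end_eq]
    omega
  · have := h.after t ⟨hb.trans ht.1, ht.2⟩
    have := h.snd.nonneg t ⟨by have := ht.1; have := h.start_lt; omega, ht.2⟩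
    omega
  · have := h.after t ⟨hb.trans ht.1, ht.2⟩
    have := h.fst.nonneg t ⟨by have := ht.1; have := h.start_lt; omega, ht.2⟩
    omega

theorem rightPass_snd_of_eq (h : Promotion y x y' x' o M b) (hb : b < p) (hp : p < M)
    (hkx : k < x (p + 1)) (hk : k = y (p + 1)) : RightPass x' y' (M + 1) p k := by
  have hob := h.start_lt
  have hp' := h.after (p + 1) ⟨by omega, hp⟩
  have hvacuous : RightPass x' y' M p k := by
    rintro t ⟨hpt, htM⟩ hyt
    have := h.after t ⟨by omega, htM⟩
    have := h.fst.nonneg t ⟨by omega, htM⟩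
    omega
  have hM := (h.after M ⟨h.lt_end, le_rfl⟩).2
  have hxM := h.snd.end_eq
  exact hvacuous.extend fun t ht _ => ⟨M, ⟨hp, ht.1.le⟩, by omega⟩

theorem leftExit_snd_of_lt (h : Promotion y x y' x' o M b) (hb : b < p) (hp : p < M)
    (hE : LeftExit x y o p q k) (hoq : o < q) (hqb : q ≤ b) (hk : k = y (p + 1)) :
    LeftExit x' y' (o + 1) p q (k + 1) := by
  have hlevel := hE.level_eq
  have hp' := h.after (p + 1) ⟨by omega, hp⟩
  refine ⟨hoq, hE.le_start, ?_, fun t ht => ?_, fun t ht => ?_⟩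
  · have := h.before q ⟨hoq, hqb⟩
    omega
  · have hxt := hE.lt_fst t ht
    rcases le_or_gt t b with htb | hbt
    · have := h.before t ⟨hoq.trans ht.1, htb⟩
      omega
    · have := h.after t ⟨hbt, ht.2.trans hp.le⟩
      omega
  · have := h.fst'.nonneg t ⟨hoq.trans_le ht.1, by have := ht.2; omega⟩
    omega

/-- If the trip ends before `b`, where the promotion has lowered the walk, it takes one further
round. -/
theorem trip_snd_of_leftExit (h : Promotion y x y' x' o M b) (hb : b < p) (hp : p < M)
    (hR : ∀ j < k, RightPass x y M p j) (hL : ∀ j < k, LeftPass x y o p j)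
    (hE : LeftExit x y o p q k) : Trip x' y' (o + 1) (M + 1) p (if q = o then M else q) := by
  have hob := h.start_lt
  have hoq := hE.le
  have hqp := hE.le_start
  have hlevel := hE.level_eq
  have hky : (k : ℤ) ≤ y (p + 1) := hE.level_le_snd h.snd.start_eq
    (h.snd.nonneg q ⟨hoq, by omega⟩) (fun t ht => h.fst.nonneg t ⟨ht.1, ht.2.trans hp⟩) hL
  have hR' j (hj : j < k) := h.rightPass_snd_of_lt hb hp (hR j hj) (by omega)
  have hL' j (hj : j < k) := h.leftPass_snd_of_lt hb hp (hL j hj) (by omega)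
  rcases lt_or_ge b q with hbq | hqb
  · have hafter : Set.Icc q (p + 1) ⊆ Set.Ioc b M := fun t ht =>
      ⟨hbq.trans_le ht.1, ht.2.trans hp⟩
    rw [if_neg (by omega)]
    exact .left k hR' hL'
      (hE.shift (by omega) (h.snd_shift_after hafter) (h.fst_shift_after hafter))
  · have hk : k = y (p + 1) := by
      have := hE.le_snd (b + 1) ⟨by omega, hb⟩
      have := h.return_eq
      omega
    have hL'' : ∀ j ≤ k, LeftPass x' y' (o + 1) p j := fun j hj =>
      hj.lt_or_eq.elim (hL' j) fun hjk => hjk ▸ h.leftPass_snd_of_leftExit hb hp hE hqb hk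
    split_ifs with hqo
    · rw [hqo, h.snd.start_eq] at hlevel
      exact .right k hR' hL'' (h.rightExit_snd_of_eq hb hp (by omega) hk)
    · have hxq := (h.pos q ⟨by omega, hqb⟩).2
      have hRk := h.rightPass_snd_of_eq hb hp (by omega) hk
      exact .left (k + 1)
        (fun j hj => (Nat.lt_succ_iff_lt_or_eq.mp hj).elim (hR' j) fun hjk => hjk ▸ hRk)
        (fun j hj => hL'' j (Nat.le_of_lt_succ hj))
        (h.leftExit_snd_of_lt hb hp hE (by omega) hqb hk)

theorem trip_snd_of_rightExit (h : Promotion y x y' x' o M b) (hb : b < p)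
    (hR : ∀ j < k, RightPass x y M p j) (hL : ∀ j ≤ k, LeftPass x y o p j)
    (hE : RightExit x y M p q k) : Trip x' y' (o + 1) (M + 1) p q := by
  have hob := h.start_lt
  have hpq := hE.start_lt
  have hqM := hE.lt
  have hpM := hpq.trans hqM
  have hky : (k : ℤ) + 1 ≤ y (p + 1) := by
    have := hE.level_eq
    have := h.fst.nonneg (q + 1) ⟨by omega, hqM⟩
    omega
  have hafter : Set.Ioc p (q + 1) ⊆ Set.Ioc b M := Set.Ioc_subset_Ioc hb.le hqM
  exact .right k (fun j hj => h.rightPass_snd_of_lt hb hpM (hR j hj) (by omega))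
    (fun j hj => h.leftPass_snd_of_lt hb hpM (hL j hj) (by omega))
    (hE.shift (by omega) (h.snd_shift_after hafter) (h.fst_shift_after hafter))

theorem trip_snd_of_lt (h : Promotion y x y' x' o M b) (hb : b < p) (hp : p < M)
    (hT : Trip x y o M p q) : Trip x' y' (o + 1) (M + 1) p (if q = o then M else q) := by
  have hob := h.start_lt
  cases hT with
  | left k hR hL hE => exact h.trip_snd_of_leftExit hb hp hR hL hE
  | right k hR hL hE =>
    have hpq := hE.start_lt
    rw [if_neg (by omega)]
    exact h.trip_snd_of_rightExit hb hR hL hE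

theorem leftPass_snd_of_gt (h : Promotion y x y' x' o M b) (hb : p < b)
    (hL : LeftPass x y o p j) : LeftPass x' y' (o + 1) p j := by
  have hbefore : Set.Icc (o + 1) (p + 1) ⊆ Set.Ioc o b := fun t ht => ⟨ht.1, ht.2.trans hb⟩
  exact hL.shift o.le_succ (h.snd_shift_before hbefore) (h.fst_shift_before hbefore)

theorem rightPass_snd_of_gt (h : Promotion y x y' x' o M b) (ho : o < p) (hb : p < b)
    (hR : RightPass x y M p j) : RightPass x' y' (M + 1) p j := by
  have hbM := h.lt_end
  have hbefore : Set.Ioc p b ⊆ Set.Ioc o b := Set.Ioc_subset_Ioc_left ho.le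
  have hp' := h.before (p + 1) ⟨by omega, hb⟩
  refine (hR.shift hbM.le (h.snd_shift_before hbefore)
    (h.fst_shift_before hbefore)).extend fun t ht hyt => ?_
  obtain ⟨hbt, htM⟩ := ht
  have hyt' := h.fst'.nonneg t ⟨by omega, htM⟩
  obtain ⟨u, ⟨hpu, hub⟩, hu⟩ := hR (b + 1) ⟨by omega, hbM⟩ (by rw [h.return_eq]; omega)
  have hxb := h.snd_return_eq
  rcases hub.lt_or_eq with hub | rfl
  · have := h.before u ⟨by omega, by omega⟩
    exact ⟨u, ⟨hpu, by omega⟩, by omega⟩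
  · have := h.before b ⟨by omega, le_rfl⟩
    exact ⟨b, ⟨hb, by omega⟩, by omega⟩

theorem rightExit_lt_return (h : Promotion y x y' x' o M b) (ho : o < p) (hb : p < b)
    (hR : ∀ j < k, RightPass x y M p j) (hL : ∀ j ≤ k, LeftPass x y o p j)
    (hE : RightExit x y M p q k) : q < b := by
  have hpq := hE.start_lt
  have hqM := hE.lt
  have hlevel := hE.level_eq
  have hreturn := h.return_eq
  rcases lt_trichotomy q b with hqb | rfl | hbq
  · exact hqb
  · exfalso
    have hxp := (h.pos (p + 1) ⟨by omega, hb⟩).2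
    have hstart := h.snd_start_eq
    rcases lt_or_ge (k : ℤ) (x (p + 1)) with hkx | hkx
    · obtain ⟨u, ⟨hou, hup⟩, hu⟩ := hL k le_rfl (o + 1) ⟨by omega, by omega⟩ (by omega)
      have := h.pos u ⟨by omega, by omega⟩
      omega
    · obtain ⟨k, rfl⟩ : ∃ m, k = m + 1 := ⟨k - 1, by omega⟩
      obtain ⟨u, ⟨hpu, huq⟩, hu⟩ := hR k k.lt_succ_self (q + 1) ⟨by omega, hqM⟩ (by omega)
      have hxq := h.snd_return_eq
      have hxq' := h.pos q ⟨by omega, le_rfl⟩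
      rcases huq.lt_or_eq with huq | rfl
      · have := h.pos u ⟨by omega, by omega⟩
        omega
      · omega
  · have := hE.le_snd (b + 1) ⟨by omega, hbq⟩
    have := h.fst.nonneg (q + 1) ⟨by omega, hqM⟩
    omega

theorem trip_snd_of_gt (h : Promotion y x y' x' o M b) (ho : o < p) (hb : p < b)
    (hT : Trip x y o M p q) : q ≠ o ∧ Trip x' y' (o + 1) (M + 1) p q := by
  cases hT with
  | left k hR hL hE =>
    have hoq := hE.start_lt_of_pos h.snd.start_eq h.fst.start_eq h.snd_start_eq.le ho
      (fun t ht => (h.pos t ⟨ht.1, ht.2.trans hb⟩).symm) hL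
    have hbefore : Set.Icc q (p + 1) ⊆ Set.Ioc o b := fun t ht =>
      ⟨hoq.trans_le ht.1, ht.2.trans hb⟩
    exact ⟨hoq.ne', .left k (fun j hj => h.rightPass_snd_of_gt ho hb (hR j hj))
      (fun j hj => h.leftPass_snd_of_gt hb (hL j hj))
      (hE.shift hoq (h.snd_shift_before hbefore) (h.fst_shift_before hbefore))⟩
  | right k hR hL hE =>
    have hqb := h.rightExit_lt_return ho hb hR hL hE
    have hpq := hE.start_lt
    have hqM := hE.lt
    have hbefore : Set.Ioc p (q + 1) ⊆ Set.Ioc o b := Set.Ioc_subset_Ioc ho.le hqb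
    exact ⟨by omega, .right k (fun j hj => h.rightPass_snd_of_gt ho hb (hR j hj))
      (fun j hj => h.leftPass_snd_of_gt hb (hL j hj))
      (hE.shift (by omega) (h.snd_shift_before hbefore) (h.fst_shift_before hbefore))⟩

theorem trip_snd (h : Promotion y x y' x' o M b) (ho : o < p) (hb : p ≠ b) (hp : p < M)
    (hT : Trip x y o M p q) : Trip x' y' (o + 1) (M + 1) p (if q = o then M else q) := by
  rcases lt_or_gt_of_ne hb with hpb | hbp
  · obtain ⟨hqo, hT'⟩ := h.trip_snd_of_gt ho hpb hT
    rwa [if_neg hqo]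
  · exact h.trip_snd_of_lt hbp hp hT

end Snd

theorem trip_appended (h : Promotion x y x' y' o M b) : Trip x' y' (o + 1) (M + 1) M b := by
  have hob := h.start_lt
  have hbM := h.lt_end
  have hx := h.fst'.end_eq
  have hy := h.snd'.end_eq
  have hE : LeftExit x' y' (o + 1) M b 0 := by
    refine ⟨hob, hbM.le, ?_, fun t ht => ?_, fun t ht => ?_⟩
    · simp only [h.fst'_eq_zero, hx, Nat.cast_zero, sub_zero]
    · have := h.after t ht
      have := h.fst.nonneg t ⟨by have := ht.1; omega, ht.2⟩
      omega
    · have := h.snd'.nonneg t ⟨by have := ht.1; omega, by have := ht.2; omega⟩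
      omega
  exact .left 0 (fun j hj => absurd hj j.not_lt_zero) (fun j hj => absurd hj j.not_lt_zero) hE

theorem arc_of_trip_return (h : Promotion x y x' y' o M b) (hT : Trip x y o M b q) :
    q ≠ o ∧ Arc x' y' (M + 1) b q := by
  have hob := h.start_lt
  have hreturn := h.return_eq
  have hy := h.snd_return_eq
  have hb' := h.before b ⟨hob, le_rfl⟩
  have hone := h.eq_one
  cases hT with
  | left k hR hL hE =>
    exfalso
    have hqb := hE.le_start
    have hlevel := hE.level_eq
    rcases hE.le.lt_or_eq with hoq | rfl
    · have := h.pos q ⟨hoq, hqb⟩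
      omega
    · have := hE.le_snd o ⟨le_rfl, hqb⟩
      have := h.pos b ⟨hob, le_rfl⟩
      have := h.fst.start_eq
      have := h.snd.start_eq
      omega
  | right k hR hL hE =>
    have hbq := hE.start_lt
    have hqM := hE.lt
    have hlevel := hE.level_eq
    have hk := hE.level_le_fst (fun t ht => h.fst.nonneg t ⟨by have := ht.1; omega, ht.2⟩) hR
    have hq' := h.after (q + 1) ⟨by omega, hqM⟩
    have hxq := h.fst.nonneg (q + 1) ⟨by omega, hqM⟩
    refine ⟨by omega, hbq, by omega, by omega, by omega, fun t ht => ?_⟩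
    have := h.after t ⟨ht.1, ht.2.trans hqM.le⟩
    have := h.fst.nonneg t ⟨by have := ht.1; omega, ht.2.trans hqM.le⟩
    have := hE.le_snd t ht
    omega

theorem end_lt_return_of_arc (h : Promotion x y x' y' o M b) (ho : o < p) (hb : p < b)
    (hfst : x p ≤ x (q + 1)) (habove : ∀ t ∈ Set.Ioc p q, x p < x t) : q < b := by
  have := h.pos p ⟨ho, hb.le⟩
  have := h.return_eq
  rcases lt_trichotomy q b with hqb | rfl | hbq
  · exact hqb
  · omega
  · have := habove (b + 1) ⟨by omega, hbq⟩
    omega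

theorem arc_fst (h : Promotion x y x' y' o M b) (ho : o < p) (hb : p ≠ b)
    (hA : Arc x y M p q) : Arc x' y' (M + 1) p q := by
  have hqM := hA.lt
  rcases lt_or_gt_of_ne hb with hpb | hbp
  · have hqb := h.end_lt_return_of_arc ho hpb hA.fst_lt.le fun t ht => (hA.above t ht).1
    have hbefore : Set.Icc p (q + 1) ⊆ Set.Ioc o b := Set.Icc_subset_Ioc ho hqb
    exact hA.shift (by omega) (h.fst_shift_before hbefore) (h.snd_shift_before hbefore)
  · have hafter : Set.Icc p (q + 1) ⊆ Set.Ioc b M := Set.Icc_subset_Ioc hbp hqM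
    exact hA.shift (by omega) (h.fst_shift_after hafter) (h.snd_shift_after hafter)

theorem arc_snd (h : Promotion y x y' x' o M b) (ho : o < p) (hb : p ≠ b)
    (hA : Arc x y M p q) : Arc x' y' (M + 1) p q := by
  have hqM := hA.lt
  rcases lt_or_gt_of_ne hb with hpb | hbp
  · have hqb := h.end_lt_return_of_arc ho hpb hA.snd_eq.ge fun t ht => (hA.above t ht).2
    have hbefore : Set.Icc p (q + 1) ⊆ Set.Ioc o b := Set.Icc_subset_Ioc ho hqb
    exact hA.shift (by omega) (h.snd_shift_before hbefore) (h.fst_shift_before hbefore)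
  · have hafter : Set.Icc p (q + 1) ⊆ Set.Ioc b M := Set.Icc_subset_Ioc hbp hqM
    exact hA.shift (by omega) (h.snd_shift_after hafter) (h.fst_shift_after hafter)

end Promotion

theorem negL_negL (l : KLetter) : negL (negL l) = l := by
  cases l <;> rfl

theorem negL_ne_A {l : KLetter} (hl : l ≠ A) : negL l ≠ A := by
  cases l <;> simp_all [negL]

theorem eq_or_eq_negL {l m : KLetter} (hl : l ≠ A) (hm : m ≠ A) : l = m ∨ l = negL m := by
  cases l <;> cases m <;> simp_all [negL]

/-- The excess of `A`'s over `l`'s among the first `t` letters of `w`. -/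
def height (l : KLetter) (w : List KLetter) (t : ℕ) : ℤ :=
  (w.take t).count A - (w.take t).count l

/-- The increment of `height l` at a letter `m`. -/
def letterStep (l m : KLetter) : ℤ :=
  (if m = A then 1 else 0) - if m = l then 1 else 0

section Height

variable {w : List KLetter} {l m : KLetter} {n t : ℕ}

theorem height_zero : height l w 0 = 0 := by
  simp [height]

theorem height_A : height A w t = 0 :=
  sub_self _

theorem height_succ (h : w[t]? = some m) : height l w (t + 1) = height l w t + letterStep l m := by
  simp only [height, letterStep, List.take_add_one, h, Option.toList_some, List.count_append,
    List.count_singleton, beq_iff_eq]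
  push_cast
  ring

theorem letterStep_A (hl : l ≠ A) : letterStep l A = 1 := by
  simp [letterStep, hl.symm]

theorem letterStep_self (hl : l ≠ A) : letterStep l l = -1 := by
  simp [letterStep, hl]

theorem letterStep_negL (hl : l ≠ A) : letterStep (negL l) l = 0 := by
  cases l <;> simp_all [letterStep, negL]

theorem count_add_count_add_count (w : List KLetter) :
    w.count A + w.count B + w.count C = w.length := by
  induction w with
  | nil => rfl
  | cons m w ih => cases m <;> simp <;> omega

theorem isKrewerasWord_iff :
    IsKrewerasWord n w ↔ w.length = 3 * n ∧ ∀ l, IsExcursion (height l w) 0 (3 * n) := by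
  have hsum := count_add_count_add_count w
  constructor
  · rintro ⟨hlen, hA, hB, hC, hpre⟩
    refine ⟨hlen, fun l => ⟨height_zero, ?_, fun t _ => ?_⟩⟩
    · cases l <;> simp [height, List.take_of_length_le hlen.le, *]
    · have := hpre t
      cases l <;> simp only [height] <;> omega
  · rintro ⟨hlen, hexc⟩
    have hend l := (hexc l).end_eq
    simp only [height, List.take_of_length_le hlen.le] at hend
    have hB := hend B
    have hC := hend C
    refine ⟨hlen, by omega, by omega, by omega, fun t => ?_⟩
    rcases le_total t (3 * n) with ht | ht
    · have hnonneg l := (hexc l).nonneg t ⟨t.zero_le, ht⟩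
      have := hnonneg B
      have := hnonneg C
      simp only [height] at *
      omega
    · rw [List.take_of_length_le (by omega)]
      omega

end Height

/-- The first return of `w` to one of the axes: the letter `L ≠ A` at the 0-based position `b` is
the first one after which some height is `0`. -/
structure IsReturn (w : List KLetter) (b : ℕ) (L : KLetter) : Prop where
  ne_A : L ≠ A
  getElem? : w[b]? = some L
  height_return : height L w (b + 1) = 0
  height_pos : ∀ l ≠ A, ∀ t ∈ Set.Ioc 0 b, 0 < height l w t

namespace IsReturn

variable {w : List KLetter} {b n t : ℕ} {l L m : KLetter}

theorem lt_length (h : IsReturn w b L) : b < w.length :=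
  (List.getElem?_eq_some_iff.mp h.getElem?).1

theorem height_eq_one (h : IsReturn w b L) : height L w b = 1 := by
  have hstep := height_succ (l := L) h.getElem?
  rw [h.height_return, letterStep_self h.ne_A] at hstep
  omega

theorem pos (h : IsReturn w b L) : 0 < b := by
  refine b.pos_of_ne_zero ?_
  rintro rfl
  simpa [height_zero] using h.height_eq_one

theorem getElem?_zero (h : IsReturn w b L) : w[0]? = some A := by
  have hlen := h.lt_length
  have hget : w[0]? = some w[0] := List.getElem?_eq_getElem _
  by_contra hne
  have hA : w[0] ≠ A := fun hA => hne (hA ▸ hget)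
  have hstep := height_succ (l := w[0]) hget
  have := h.height_pos w[0] hA 1 ⟨one_pos, h.pos⟩
  rw [letterStep_self hA, height_zero, zero_add] at hstep
  omega

theorem height_negL_return (h : IsReturn w b L) :
    height (negL L) w (b + 1) = height (negL L) w b := by
  rw [height_succ h.getElem?, letterStep_negL h.ne_A, add_zero]

theorem kiota_eq (h : IsReturn w b L) : kiota w = b + 1 := by
  have hL := h.height_return
  have hB := h.height_pos B (by decide)
  have hC := h.height_pos C (by decide)
  simp only [height] at hL hB hC
  suffices hfind : (List.range (w.length + 1)).find? (fun k => decide (1 ≤ k) &&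
      ((w.take k).count A == (w.take k).count B ||
        (w.take k).count A == (w.take k).count C)) = some (b + 1) by
    rw [kiota, List.headD_eq_head?_getD, List.head?_filter, hfind, Option.getD_some]
  rw [List.find?_range_eq_some]
  refine ⟨?_, by simpa using h.lt_length, fun t ht => ?_⟩
  · have := h.ne_A
    cases L <;> simp_all <;> omega
  · rcases t.eq_zero_or_pos with rfl | htpos
    · simp
    · have := hB t ⟨htpos, by omega⟩
      have := hC t ⟨htpos, by omega⟩
      simp
      omega

theorem exists_eq_and_pro_eq (h : IsReturn w b L) : ∃ u v, u.length + 1 = b ∧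
    w = A :: (u ++ L :: v) ∧ pro w = u ++ A :: (v ++ [L]) := by
  obtain ⟨_ | b, hb⟩ : ∃ b', b' = b := ⟨b, rfl⟩
  · exact absurd h.pos (by omega)
  subst hb
  obtain ⟨w, rfl⟩ : ∃ w', w = A :: w' := by
    have := h.getElem?_zero
    cases w <;> simp_all
  have hget : w[b]? = some L := by simpa using h.getElem?
  obtain ⟨hb, rfl⟩ := List.getElem?_eq_some_iff.mp hget
  refine ⟨w.take b, w.drop (b + 1), by simpa using hb.le, ?_, ?_⟩
  · simp
  · rw [pro, h.kiota_eq]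
    simp [List.set_eq_take_append_cons_drop, hb]

theorem pro_perm (h : IsReturn w b L) : (pro w).Perm w := by
  obtain ⟨u, v, -, hw, hpro⟩ := h.exists_eq_and_pro_eq
  rw [hpro, hw]
  refine List.perm_middle.trans (.cons _ (.append_left _ ?_))
  exact List.perm_append_singleton L v

theorem getElem?_pro (h : IsReturn w b L) (hb : t + 1 ≠ b) (ht : t + 1 < w.length) :
    (pro w)[t]? = w[t + 1]? := by
  obtain ⟨u, v, rfl, hw, hpro⟩ := h.exists_eq_and_pro_eq
  rw [hpro]
  simp only [hw, List.getElem?_cons_succ, List.getElem?_append, List.getElem?_cons] at ht ⊢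
  grind

theorem getElem?_pro_return (h : IsReturn w b L) (hb : t + 1 = b) : (pro w)[t]? = some A := by
  obtain ⟨u, v, rfl, -, hpro⟩ := h.exists_eq_and_pro_eq
  obtain rfl : t = u.length := by omega
  simp [hpro]

theorem getElem?_pro_last (h : IsReturn w b L) (ht : t + 1 = w.length) :
    (pro w)[t]? = some L := by
  obtain ⟨u, v, rfl, hw, hpro⟩ := h.exists_eq_and_pro_eq
  obtain rfl : t = u.length + (v.length + 1) := by simp [hw] at ht; omega
  simp [hpro]

theorem height_pro_of_lt (h : IsReturn w b L) (hl : l ≠ A) (ht : t < b) :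
    height l (pro w) t = height l w (t + 1) - 1 := by
  obtain ⟨u, v, rfl, hw, hpro⟩ := h.exists_eq_and_pro_eq
  rw [hpro, hw, height, height, List.take_succ_cons, List.take_append_of_le_length (by omega),
    List.take_append_of_le_length (by omega), List.count_cons_self, List.count_cons_of_ne hl.symm]
  push_cast
  ring

theorem height_pro_of_ge (h : IsReturn w b L) (hb : b ≤ t) (ht : t < w.length) :
    height l (pro w) t = height l w (t + 1) - letterStep l L := by
  obtain ⟨u, v, rfl, hw, hpro⟩ := h.exists_eq_and_pro_eq
  obtain ⟨s, rfl⟩ := Nat.exists_eq_add_of_le hb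
  have hL := h.ne_A
  have hs : s ≤ v.length := by simp [hw] at ht; omega
  have htake : (pro w).take (u.length + 1 + s) = u ++ A :: v.take s := by
    rw [hpro, add_assoc, List.take_length_add_append, add_comm 1, List.take_succ_cons,
      List.take_append_of_le_length hs]
  have htake' : w.take (u.length + 1 + s + 1) = A :: (u ++ L :: v.take s) := by
    rw [hw, List.take_succ_cons, add_assoc, List.take_length_add_append, add_comm 1,
      List.take_succ_cons]
  rw [height, height, htake, htake', letterStep]
  simp only [List.count_cons, List.count_append, beq_iff_eq, if_neg hL]
  push_cast
  ring

theorem isKrewerasWord_pro (h : IsReturn w b L) (hw : IsKrewerasWord n w) :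
    IsKrewerasWord n (pro w) := by
  rw [isKrewerasWord_iff] at hw ⊢
  obtain ⟨hlen, hexc⟩ := hw
  have hlen' : (pro w).length = 3 * n := h.pro_perm.length_eq.trans hlen
  have hend l : height l (pro w) (3 * n) = 0 := by
    rw [← (hexc l).end_eq]
    simp only [height, List.take_of_length_le hlen'.le, List.take_of_length_le hlen.le,
      h.pro_perm.count_eq]
  refine ⟨hlen', fun l => ⟨height_zero, hend l, fun t ht => ?_⟩⟩
  rcases eq_or_ne l A with rfl | hl
  · exact height_A.ge
  rcases ht.2.lt_or_eq with htn | rfl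
  · rcases lt_or_ge t b with htb | hbt
    · have := h.height_pro_of_lt hl htb
      have := h.height_pos l hl (t + 1) ⟨t.succ_pos, htb⟩
      omega
    · rw [h.height_pro_of_ge hbt (htn.trans_eq hlen.symm), letterStep, if_neg h.ne_A]
      have := (hexc l).nonneg (t + 1) ⟨zero_le, htn⟩
      split_ifs <;> omega
  · exact (hend l).ge

end IsReturn

namespace IsKrewerasWord

variable {w : List KLetter} {n : ℕ}

theorem exists_isReturn (hw : IsKrewerasWord n w) (hn : n ≠ 0) : ∃ b L, IsReturn w b L := by
  classical
  obtain ⟨hlen, hexc⟩ := isKrewerasWord_iff.mp hw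
  have hex : ∃ b < 3 * n, ∃ l ≠ A, height l w (b + 1) = 0 := by
    refine ⟨3 * n - 1, by omega, B, by decide, ?_⟩
    rw [Nat.sub_add_cancel (by omega)]
    exact (hexc B).end_eq
  obtain ⟨b, ⟨hbn, l, hl, hreturn⟩, hmin⟩ : ∃ b, (b < 3 * n ∧ ∃ l ≠ A, height l w (b + 1) = 0) ∧
      ∀ b' < b, ¬ (b' < 3 * n ∧ ∃ l ≠ A, height l w (b' + 1) = 0) :=
    ⟨Nat.find hex, Nat.find_spec hex, fun b' => Nat.find_min hex⟩
  have hpos : ∀ l ≠ A, ∀ t ∈ Set.Ioc 0 b, 0 < height l w t := by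
    rintro l hl t ⟨ht, htb⟩
    refine ((hexc l).nonneg t ⟨zero_le, by omega⟩).lt_of_ne' fun hzero => ?_
    obtain ⟨t, rfl⟩ := Nat.exists_eq_add_of_le' ht
    exact hmin t htb ⟨by omega, l, hl, hzero⟩
  have hget : w[b]? = some w[b] := List.getElem?_eq_getElem _
  have hne : w[b] ≠ A := by
    intro hA
    rw [height_succ hget, hA, letterStep_A hl] at hreturn
    have := (hexc l).nonneg b ⟨zero_le, hbn.le⟩
    omega
  refine ⟨b, w[b], hne, hget, ?_, hpos⟩
  rcases eq_or_eq_negL hl hne with heq | hneg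
  · rwa [← heq]
  -- `height l` does not change at `b`, so `b = 0`: the word starts with a letter other than `A`.
  exfalso
  rw [height_succ hget, hneg, letterStep_negL hne, add_zero] at hreturn
  obtain rfl : b = 0 := by
    by_contra hb
    exact (hpos _ (negL_ne_A hne) b ⟨by omega, le_rfl⟩).ne' hreturn
  have := (hexc w[0]).nonneg 1 ⟨zero_le, hbn⟩
  have hstep := height_succ (l := w[0]) hget
  rw [letterStep_self hne, height_zero, zero_add] at hstep
  omega

theorem iterate_pro (hw : IsKrewerasWord n w) (hn : n ≠ 0) (k : ℕ) :
    IsKrewerasWord n (pro^[k] w) := by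
  induction k with
  | zero => exact hw
  | succ k ih =>
    obtain ⟨b, L, h⟩ := ih.exists_isReturn hn
    rw [Function.iterate_succ_apply']
    exact h.isKrewerasWord_pro ih

end IsKrewerasWord

/-- The height function of `pro^[o]` of some word, in absolute time: its `i`-th letter (counted
from `0`) is the step at time `i + o`. In this way promotion leaves most letters in place. -/
def track (l : KLetter) (w : List KLetter) (o t : ℕ) : ℤ :=
  height l w (t - o)

theorem track_add (l : KLetter) (w : List KLetter) (o t : ℕ) :
    track l w o (t + o) = height l w t := by
  rw [track, Nat.add_sub_cancel]

theorem track_succ_add (l : KLetter) (w : List KLetter) (o t : ℕ) :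
    track l w (o + 1) (t + 1 + o) = height l w t := by
  rw [add_assoc, add_comm 1, track_add]

theorem IsKrewerasWord.isExcursion_track {w : List KLetter} {n : ℕ} (hw : IsKrewerasWord n w)
    (l : KLetter) (o : ℕ) : IsExcursion (track l w o) o (3 * n + o) :=
  ((isKrewerasWord_iff.mp hw).2 l).delay o

theorem IsReturn.promotion {w : List KLetter} {b n : ℕ} {L : KLetter} (h : IsReturn w b L)
    (hw : IsKrewerasWord n w) (o : ℕ) :
    Promotion (track L w o) (track (negL L) w o) (track L (pro w) (o + 1))
      (track (negL L) (pro w) (o + 1)) o (3 * n + o) (b + o) := by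
  have hlen := hw.1
  have hbn := h.lt_length
  have hL := h.ne_A
  have hL' := negL_ne_A hL
  have hw' := h.isKrewerasWord_pro hw
  refine ⟨hw.isExcursion_track L o, hw.isExcursion_track _ o, hw'.isExcursion_track L _,
    hw'.isExcursion_track _ _, Nat.lt_add_of_pos_left h.pos, by omega, ?_, ?_, ?_,
    fun t ht => ?_, fun t ht => ?_, fun t ht => ?_⟩
  · rw [track_add, h.height_eq_one]
  · rw [Nat.add_right_comm, track_add, h.height_return]
  · rw [Nat.add_right_comm, track_add, track_add, h.height_negL_return]
  all_goals
    obtain ⟨s, rfl⟩ : ∃ s, t = s + 1 + o := ⟨t - o - 1, by have := ht.1; omega⟩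
    simp only [track_add, track_succ_add]
    obtain ⟨hlt, hle⟩ := ht
  · exact ⟨h.height_pos L hL _ ⟨s.succ_pos, by omega⟩, h.height_pos _ hL' _ ⟨s.succ_pos, by omega⟩⟩
  · exact ⟨h.height_pro_of_lt hL (by omega), h.height_pro_of_lt hL' (by omega)⟩
  · rw [h.height_pro_of_ge (by omega) (by omega), h.height_pro_of_ge (by omega) (by omega),
      letterStep_self hL, letterStep_negL hL]
    exact ⟨sub_neg_eq_add _ _, sub_zero _⟩

/-- The letter at time `p` heads for the time `q` in the colour `L ≠ A`: either it is an `L` whose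
trip ends at `q`, or it has already been turned into an `A` and its arc ends at `q`. -/
inductive Heading (n : ℕ) (w : List KLetter) (o p : ℕ) (L : KLetter) (q : ℕ) : Prop
  | trip (hget : w[p - o]? = some L)
      (hT : Trip (track L w o) (track (negL L) w o) o (3 * n + o) p q)
  | arc (hget : w[p - o]? = some A)
      (hA : Arc (track L w o) (track (negL L) w o) (3 * n + o) p q)

theorem Heading.promote {w : List KLetter} {n o p q : ℕ} {L : KLetter} (h : Heading n w o p L q)
    (hw : IsKrewerasWord n w) (hL : L ≠ A) (ho : o < p) (hp : p < 3 * n + o) :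
    Heading n (pro w) (o + 1) p L (if q = o then 3 * n + o else q) := by
  obtain ⟨b, K, hK⟩ := hw.exists_isReturn (by omega)
  have hpro := hK.promotion hw o
  have hlen := hw.1
  have hget (hpb : p ≠ b + o) : (pro w)[p - (o + 1)]? = w[p - o]? := by
    rw [hK.getElem?_pro (by omega) (by omega)]
    congr 1
    omega
  cases h with
  | trip hpL hT =>
    rcases eq_or_ne p (b + o) with rfl | hpb
    · obtain rfl : K = L := by simpa [hK.getElem?] using hpL
      obtain ⟨hqo, hA⟩ := hpro.arc_of_trip_return hT
      rw [if_neg hqo]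
      exact .arc (hK.getElem?_pro_return (by omega)) hA
    · refine .trip ((hget hpb).trans hpL) ?_
      rcases eq_or_eq_negL hL hK.ne_A with rfl | rfl
      · obtain ⟨hqo, hT'⟩ := hpro.trip_fst ho hpb hp hT
        rwa [if_neg hqo]
      · rw [negL_negL] at hT ⊢
        exact hpro.trip_snd ho hpb hp hT
  | arc hpA hA =>
    have hpb : p ≠ b + o := by
      rintro rfl
      rw [Nat.add_sub_cancel, hK.getElem?] at hpA
      exact hK.ne_A (Option.some_injective _ hpA)
    have := hA.start_lt
    rw [if_neg (by omega)]
    refine .arc ((hget hpb).trans hpA) ?_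
    rcases eq_or_eq_negL hL hK.ne_A with rfl | rfl
    · exact hpro.arc_fst ho hpb hA
    · rw [negL_negL] at hA ⊢
      exact hpro.arc_snd ho hpb hA

namespace IsReturn

variable {w : List KLetter} {n b : ℕ} {L : KLetter}

theorem heading_iterate_pro (h : IsReturn w b L) (hw : IsKrewerasWord n w) (j : ℕ)
    (hj : j < 3 * n) :
    Heading n (pro^[j + 1] w) (j + 1) (3 * n) L (if b ≤ j then b + 3 * n else b) := by
  have hlen := hw.1
  induction j with
  | zero =>
    have hb := h.pos
    rw [if_neg (by omega)]
    exact .trip (h.getElem?_pro_last (by omega)) (h.promotion hw 0).trip_appended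
  | succ j ih =>
    have hstep := (ih (by omega)).promote (hw.iterate_pro (by omega) _) h.ne_A hj (by omega)
    rw [← Function.iterate_succ_apply' pro] at hstep
    convert hstep using 1
    have := h.lt_length
    split_ifs <;> omega

theorem of_arc {o : ℕ} (hw : IsKrewerasWord n w) (hL : L ≠ A)
    (hA : Arc (track L w o) (track (negL L) w o) (3 * n + o) o (b + o)) :
    IsReturn w b (negL L) := by
  have hlen := hw.1
  have hb := hA.start_lt
  have hbn := hA.lt
  have habove : ∀ t ∈ Set.Ioc 0 b, 0 < height L w t ∧ 0 < height (negL L) w t := by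
    intro t ht
    simpa only [track, Nat.add_sub_cancel, Nat.sub_self, height_zero] using
      hA.above (t + o) ⟨Nat.lt_add_of_pos_left ht.1, Nat.add_le_add_right ht.2 o⟩
  have hreturn : height (negL L) w (b + 1) = 0 := by
    have := hA.snd_eq
    rwa [Nat.add_right_comm, track_add, track, Nat.sub_self, height_zero] at this
  have hget : w[b]? = some w[b] := List.getElem?_eq_getElem _
  have hletter : w[b] = negL L := by
    by_contra hne
    have := (habove b ⟨by omega, le_rfl⟩).2
    rw [height_succ hget, letterStep, if_neg hne] at hreturn
    split_ifs at hreturn <;> omega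
  refine ⟨negL_ne_A hL, hletter ▸ hget, hreturn, fun l hl t ht => ?_⟩
  rcases eq_or_eq_negL hl hL with rfl | rfl
  exacts [(habove t ht).1, (habove t ht).2]

theorem iterate_pro_three_mul (h : IsReturn w b L) (hw : IsKrewerasWord n w) :
    IsReturn (pro^[3 * n] w) b (negL L) := by
  have hlen := hw.1
  have hbn := h.lt_length
  have hw' := hw.iterate_pro (by omega) (3 * n)
  have hheading := h.heading_iterate_pro hw (3 * n - 1) (by omega)
  rw [Nat.sub_add_cancel (by omega), if_pos (by omega)] at hheading
  cases hheading with
  | trip hget hT =>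
    obtain ⟨b', K, h'⟩ := hw'.exists_isReturn (by omega)
    rw [Nat.sub_self, h'.getElem?_zero] at hget
    exact absurd (Option.some_injective _ hget).symm h.ne_A
  | arc hget hA =>
    exact of_arc hw' h.ne_A hA

end IsReturn

theorem map_negL_eq_of_isReturn_iterate {v v' : List KLetter} (hlen : v'.length = v.length)
    (h : ∀ k, ∃ b L, IsReturn (pro^[k] v) b L ∧ IsReturn (pro^[k] v') b (negL L)) :
    v' = v.map negL := by
  refine List.ext_getElem? fun t => ?_
  rw [List.getElem?_map]
  induction t generalizing v v' with
  | zero =>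
    obtain ⟨b, L, hv, hv'⟩ : ∃ b L, IsReturn v b L ∧ IsReturn v' b (negL L) := h 0
    rw [hv.getElem?_zero, hv'.getElem?_zero]
    rfl
  | succ t ih =>
    obtain ⟨b, L, hv, hv'⟩ : ∃ b L, IsReturn v b L ∧ IsReturn v' b (negL L) := h 0
    rcases eq_or_ne (t + 1) b with rfl | hb
    · rw [hv.getElem?, hv'.getElem?]
      rfl
    rcases lt_or_ge (t + 1) v.length with ht | ht
    · rw [← hv.getElem?_pro hb ht, ← hv'.getElem?_pro hb (ht.trans_eq hlen.symm)]
      exact ih (by rw [hv.pro_perm.length_eq, hv'.pro_perm.length_eq, hlen]) fun k => h (k + 1)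
    · rw [List.getElem?_eq_none ht, List.getElem?_eq_none (hlen.trans_le ht)]
      rfl

theorem iterate_pro_eq_map_negL {w : List KLetter} {n : ℕ} (hw : IsKrewerasWord n w) (hn : n ≠ 0) :
    pro^[3 * n] w = w.map negL := by
  refine map_negL_eq_of_isReturn_iterate ((hw.iterate_pro hn _).1.trans hw.1.symm) fun k => ?_
  obtain ⟨b, L, h⟩ := (hw.iterate_pro hn k).exists_isReturn hn
  refine ⟨b, L, h, ?_⟩
  rw [← Function.iterate_add_apply, add_comm, Function.iterate_add_apply]
  exact h.iterate_pro_three_mul (hw.iterate_pro hn k)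

/-- `pro^[3n] w` is obtained from `w` by swapping all `B`'s and `C`'s;
in particular `pro^[6n] w = w`. -/
theorem promotion_order (n : ℕ) (w : List KLetter) (hw : IsKrewerasWord n w) :
    pro^[3 * n] w = w.map negL ∧ pro^[6 * n] w = w := by
  rcases eq_or_ne n 0 with rfl | hn
  · obtain rfl : w = [] := List.length_eq_zero_iff.mp hw.1
    exact ⟨rfl, rfl⟩
  have hneg : pro^[3 * n] w = w.map negL := iterate_pro_eq_map_negL hw hn
  refine ⟨hneg, ?_⟩
  calc pro^[6 * n] w = pro^[3 * n] (pro^[3 * n] w) := by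
        rw [← Function.iterate_add_apply, ← add_mul]
    _ = (w.map negL).map negL := by
        rw [iterate_pro_eq_map_negL (hw.iterate_pro hn _) hn, hneg]
    _ = w := by simp [Function.comp_def, negL_negL]
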